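/- Let N ≥ 1 and let φ ∈ W^{2,1}(ℝ^N) satisfy ∫_{{x : φ(x) > 0}} Δφ(x) dx = 0. Then the positive part φ⁺ = max(φ,0) belongs to W^{2,1}(ℝ^N) and Δφ⁺ = 1_{{φ > 0}} · Δφ almost everywhere in ℝ^N. -/

import Mathlib

open MeasureTheory Real Filter Topology

noncomputable section

/-- `ℝ^N` as a Euclidean space. -/
abbrev Euc (N : ℕ) := EuclideanSpace ℝ (Fin N)

/-- `g` is the weak (distributional) partial derivative of `f` in the `i`-th coordinate
direction: `∫ f ∂ᵢψ = -∫ g ψ` for all smooth compactly supported test functions `ψ`. -/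
def HasWeakPDeriv (N : ℕ) (f : Euc N → ℝ) (i : Fin N) (g : Euc N → ℝ) : Prop :=
  ∀ ψ : Euc N → ℝ, ContDiff ℝ (⊤ : ℕ∞) ψ → HasCompactSupport ψ →
    (∫ x, f x * fderiv ℝ ψ x (EuclideanSpace.single i 1)) = -∫ x, g x * ψ x

open scoped Convolution

/-- Mollification. -/
def moll {N : ℕ} (b : ContDiffBump (0 : Euc N)) (f : Euc N → ℝ) : Euc N → ℝ :=
  (b.normed volume) ⋆[ContinuousLinearMap.lsmul ℝ ℝ, volume] f

lemma moll_apply {N : ℕ} (b : ContDiffBump (0 : Euc N)) (f : Euc N → ℝ) (x : Euc N) :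
    moll b f x = ∫ t, b.normed volume (x - t) * f t := by
  unfold moll
  rw [convolution_lsmul_swap]
  rfl

lemma moll_integrable {N : ℕ} (b : ContDiffBump (0 : Euc N)) {f : Euc N → ℝ}
    (hf : Integrable f) : Integrable (moll b f) :=
  b.integrable_normed.integrable_convolution _ hf

lemma moll_contDiff {N : ℕ} (b : ContDiffBump (0 : Euc N)) {f : Euc N → ℝ}
    (hf : Integrable f) : ContDiff ℝ 1 (moll b f) :=
  b.hasCompactSupport_normed.contDiff_convolution_left _ (b.contDiff_normed (n := 1))
    hf.locallyIntegrable

lemma moll_bound {N : ℕ} (b : ContDiffBump (0 : Euc N)) {f : Euc N → ℝ}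
    (hf : Integrable f) : ∃ C, ∀ x, |moll b f x| ≤ C := by
  obtain ⟨C, hC⟩ := b.hasCompactSupport_normed.exists_bound_of_continuous
    (b.continuous_normed (μ := volume))
  refine ⟨∫ t, C * |f t|, fun x => ?_⟩
  rw [moll_apply]
  rw [← Real.norm_eq_abs]
  refine (norm_integral_le_integral_norm _).trans ?_
  refine integral_mono_of_nonneg (Eventually.of_forall fun t => norm_nonneg _)
    (hf.abs.const_mul C) (Eventually.of_forall fun t => ?_)
  simp only [norm_mul]
  exact mul_le_mul_of_nonneg_right (hC _) (abs_nonneg _)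

lemma moll_fderiv {N : ℕ} (b : ContDiffBump (0 : Euc N)) {f g : Euc N → ℝ} {i : Fin N}
    (hf : Integrable f) (hw : HasWeakPDeriv N f i g) (x : Euc N) :
    fderiv ℝ (moll b f) x (EuclideanSpace.single i 1) = moll b g x := by
  have h1 := b.hasCompactSupport_normed.hasFDerivAt_convolution_left
    (ContinuousLinearMap.lsmul ℝ ℝ) (b.contDiff_normed (n := 1) (μ := volume))
    hf.locallyIntegrable x
  have hc : HasCompactSupport (fun t => b.normed volume (x - t)) :=
    b.hasCompactSupport_normed.comp_homeomorph (Homeomorph.subLeft x)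
  have hd : ContDiff ℝ (⊤ : ℕ∞) (fun t => b.normed volume (x - t)) :=
    (b.contDiff_normed (n := ⊤) (μ := volume)).comp (contDiff_const.sub contDiff_id)
  have h2 := hw _ hd hc
  have h3 : ∀ t, fderiv ℝ (fun t => b.normed volume (x - t)) t (EuclideanSpace.single i 1)
      = - fderiv ℝ (b.normed volume) (x - t) (EuclideanSpace.single i 1) := by
    intro t
    have hd1 : HasFDerivAt (b.normed volume) (fderiv ℝ (b.normed volume) (x - t)) (x - t) :=
      ((b.contDiff_normed (n := 1) (μ := volume)).differentiable one_ne_zero _).hasFDerivAt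
    have hd2 := hd1.comp t ((hasFDerivAt_id t).const_sub x)
    have hd3 := hd2.fderiv
    simp only [Function.comp_def] at hd3
    rw [hd3]
    simp
  rw [moll_apply]
  unfold moll
  rw [h1.fderiv, convolution_eq_swap]
  have hex := (b.hasCompactSupport_normed (μ := volume)).fderiv (𝕜 := ℝ) |>.convolutionExists_left
    ((ContinuousLinearMap.lsmul ℝ ℝ : ℝ →L[ℝ] ℝ →L[ℝ] ℝ).precompL (Euc N))
    ((b.contDiff_normed (n := 1) (μ := volume)).continuous_fderiv one_ne_zero)
    hf.locallyIntegrable x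
  rw [ContinuousLinearMap.integral_apply hex.integrable_swap]
  simp only [h3, mul_neg, integral_neg, neg_inj] at h2
  simp only [ContinuousLinearMap.precompL_apply, ContinuousLinearMap.lsmul_apply, smul_eq_mul]
  rw [show (∫ t, b.normed volume (x - t) * g t) = ∫ t, g t * b.normed volume (x - t) from by
    simp only [mul_comm], ← h2]
  simp only [mul_comm]

lemma moll_abs_le {N : ℕ} (b : ContDiffBump (0 : Euc N)) {f : Euc N → ℝ}
    (hf : Integrable f) : ∫ x, |moll b f x| ≤ ∫ x, |f x| := by
  have h1 : ∫ x, moll b (fun x => |f x|) x = ∫ x, |f x| := by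
    unfold moll
    rw [integral_convolution _ b.integrable_normed hf.abs, b.integral_normed]
    simp
  rw [← h1]
  refine integral_mono (moll_integrable b hf).abs (moll_integrable b hf.abs) fun x => ?_
  simp only [moll_apply]
  rw [← Real.norm_eq_abs]
  refine (norm_integral_le_integral_norm _).trans (le_of_eq ?_)
  simp only [norm_mul, Real.norm_eq_abs, abs_of_nonneg (b.nonneg_normed _)]

lemma scheffe {N : ℕ} {f : Euc N → ℝ} {F : ℕ → Euc N → ℝ} (hf : Integrable f)
    (hF : ∀ n, Integrable (F n)) (hle : ∀ n, ∫ x, |F n x| ≤ ∫ x, |f x|)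
    (hlim : ∀ᵐ x, Tendsto (fun n => F n x) atTop (𝓝 (f x))) :
    Tendsto (fun n => ∫ x, |F n x - f x|) atTop (𝓝 0) := by
  have h1 : Tendsto (fun n => ∫ x, (|F n x - f x| - |F n x| + |f x|)) atTop
      (𝓝 (∫ x : Euc N, (0 : ℝ))) := by
    refine tendsto_integral_of_dominated_convergence (fun x => 2 * |f x|) (fun n => ?_)
      (hf.abs.const_mul 2) (fun n => Eventually.of_forall fun x => ?_) ?_
    · exact ((((hF n).sub hf).abs.sub (hF n).abs).add hf.abs).aestronglyMeasurable
    · have := abs_sub_abs_le_abs_sub (F n x) (f x)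
      have := abs_sub (F n x) (f x)
      rw [Real.norm_eq_abs, abs_le]
      constructor <;> linarith [abs_nonneg (f x)]
    · filter_upwards [hlim] with x hx
      have := (((hx.sub_const (f x)).abs).sub hx.abs).add_const (|f x|)
      simpa using this
  rw [integral_zero] at h1
  refine squeeze_zero (fun n => integral_nonneg fun x => abs_nonneg _) (fun n => ?_) h1
  have e1 : ∫ x, (|F n x - f x| - |F n x| + |f x|)
      = (∫ x, |F n x - f x|) - (∫ x, |F n x|) + ∫ x, |f x| := by
    have i1 : Integrable (fun x => |F n x - f x|) := ((hF n).sub hf).abs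
    have i2 : Integrable (fun x => |F n x - f x| - |F n x|) := i1.sub (hF n).abs
    rw [integral_add i2 hf.abs, integral_sub i1 (hF n).abs]
  rw [e1]
  linarith [hle n]

lemma exists_bumps (N : ℕ) : ∃ b : ℕ → ContDiffBump (0 : Euc N),
    ∀ f : Euc N → ℝ, Integrable f →
      (∀ᵐ x, Tendsto (fun n => moll (b n) f x) atTop (𝓝 (f x))) ∧
      Tendsto (fun n => ∫ x, |moll (b n) f x - f x|) atTop (𝓝 0) := by
  let b : ℕ → ContDiffBump (0 : Euc N) := fun n =>
    { rIn := 1 / ((n : ℝ) + 1), rOut := 2 * (1 / ((n : ℝ) + 1))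
      rIn_pos := by positivity
      rIn_lt_rOut := by
        have : 0 < 1 / ((n : ℝ) + 1) := by positivity
        linarith }
  refine ⟨b, fun f hf => ?_⟩
  have h1 : ∀ᵐ x, Tendsto (fun n => moll (b n) f x) atTop (𝓝 (f x)) := by
    refine ContDiffBump.ae_convolution_tendsto_right_of_locallyIntegrable (K := 2) ?_
      (Eventually.of_forall fun n => le_rfl) hf.locallyIntegrable
    have := (tendsto_one_div_add_atTop_nhds_zero_nat (𝕜 := ℝ)).const_mul 2
    rw [mul_zero] at this
    exact this
  exact ⟨h1, scheffe hf (fun n => moll_integrable _ hf) (fun n => moll_abs_le _ hf) h1⟩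

lemma tendsto_mul_L1 {N : ℕ} {a : ℕ → Euc N → ℝ} {a' : Euc N → ℝ} {c : ℕ → Euc N → ℝ}
    {c' : Euc N → ℝ} (C : ℝ) (ha : ∀ n, AEStronglyMeasurable (a n))
    (haC : ∀ n x, |a n x| ≤ C) (halim : ∀ᵐ x, Tendsto (fun n => a n x) atTop (𝓝 (a' x)))
    (hc : ∀ n, Integrable (c n)) (hc' : Integrable c')
    (hclim : Tendsto (fun n => ∫ x, |c n x - c' x|) atTop (𝓝 0)) :
    Tendsto (fun n => ∫ x, a n x * c n x) atTop (𝓝 (∫ x, a' x * c' x)) := by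
  have h1 : Tendsto (fun n => ∫ x, a n x * c' x) atTop (𝓝 (∫ x, a' x * c' x)) := by
    refine tendsto_integral_of_dominated_convergence (fun x => C * |c' x|)
      (fun n => (ha n).mul hc'.aestronglyMeasurable) (hc'.abs.const_mul C)
      (fun n => Eventually.of_forall fun x => ?_) ?_
    · rw [norm_mul]
      exact mul_le_mul_of_nonneg_right (haC n x) (abs_nonneg _)
    · filter_upwards [halim] with x hx using hx.mul_const _
  have h2 : Tendsto (fun n => ∫ x, a n x * (c n x - c' x)) atTop (𝓝 0) := by
    refine squeeze_zero_norm (fun n => ?_) (by simpa using hclim.const_mul C)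
    rw [← integral_const_mul]
    refine (norm_integral_le_integral_norm _).trans ?_
    refine integral_mono_of_nonneg (Eventually.of_forall fun t => norm_nonneg _)
      (((hc n).sub hc').abs.const_mul C) (Eventually.of_forall fun t => ?_)
    simp only [norm_mul]
    exact mul_le_mul_of_nonneg_right (haC _ _) (abs_nonneg _)
  have h3 := h2.add h1
  rw [zero_add] at h3
  refine h3.congr fun n => ?_
  have i1 : Integrable (fun x => a n x * (c n x - c' x)) :=
    ((hc n).sub hc').bdd_mul (ha n) (Eventually.of_forall (haC n))
  rw [← integral_add i1 (hc'.bdd_mul (ha n) (Eventually.of_forall (haC n)))]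
  congr 1
  ext x
  ring

lemma comp_fderiv {N : ℕ} {F F' : ℝ → ℝ} (hF : ∀ s, HasDerivAt F (F' s) s) {u : Euc N → ℝ}
    (hu : Differentiable ℝ u) (x v : Euc N) :
    fderiv ℝ (fun y => F (u y)) x v = F' (u x) * fderiv ℝ u x v := by
  have := ((hF (u x)).comp_hasFDerivAt x (hu x).hasFDerivAt).fderiv
  simp only [Function.comp_def] at this
  rw [this]
  simp

lemma comp_diff {N : ℕ} {F F' : ℝ → ℝ} (hF : ∀ s, HasDerivAt F (F' s) s) {u : Euc N → ℝ}
    (hu : Differentiable ℝ u) : Differentiable ℝ (fun y => F (u y)) := fun x =>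
  ((hF (u x)).comp_hasFDerivAt x (hu x).hasFDerivAt).differentiableAt

lemma smooth_chain {N : ℕ} {F F' : ℝ → ℝ} (hF : ∀ s, HasDerivAt F (F' s) s)
    (hF' : Continuous F') {u w ψ : Euc N → ℝ} {v : Euc N} (hu : Differentiable ℝ u)
    (huw : ∀ x, fderiv ℝ u x v = w x) (hw : Continuous w)
    (hψ : ContDiff ℝ (⊤ : ℕ∞) ψ) (hψc : HasCompactSupport ψ) :
    (∫ x, F (u x) * fderiv ℝ ψ x v) = - ∫ x, F' (u x) * (w x * ψ x) := by
  have hFc : Continuous F := continuous_iff_continuousAt.2 fun s => (hF s).continuousAt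
  have hψ' : Continuous (fun x => fderiv ℝ ψ x v) :=
    (hψ.continuous_fderiv (by simp)).clm_apply continuous_const
  have hψ'c : HasCompactSupport (fun x => fderiv ℝ ψ x v) := hψc.fderiv_apply (𝕜 := ℝ) v
  have huc := hu.continuous
  have hψcont := hψ.continuous
  rw [integral_mul_fderiv_eq_neg_fderiv_mul_of_integrable]
  · congr 2
    ext x
    rw [comp_fderiv hF hu, huw]
    ring
  · simp only [comp_fderiv hF hu, huw]
    exact Continuous.integrable_of_hasCompactSupport (by fun_prop) hψc.mul_left
  · exact Continuous.integrable_of_hasCompactSupport (by fun_prop) hψ'c.mul_left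
  · exact Continuous.integrable_of_hasCompactSupport (by fun_prop) hψc.mul_left
  · exact fun x _ => comp_diff hF hu x
  · exact fun x _ => hψ.differentiable (by simp) x

lemma smooth_second {N : ℕ} {F F' : ℝ → ℝ} (hF : ∀ s, HasDerivAt F (F' s) s)
    (hF' : Continuous F') {K : ℝ} (hF0 : ∀ s, 0 ≤ F' s) (hFK : ∀ s, |F' s| ≤ K)
    (hF1 : ∀ s, |F s| ≤ 1)
    {u : Euc N → ℝ} {U : Fin N → Euc N → ℝ} {V : Fin N → Fin N → Euc N → ℝ}
    (hu : Differentiable ℝ u)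
    (huU : ∀ i x, fderiv ℝ u x (EuclideanSpace.single i 1) = U i x)
    (hU : ∀ i, Differentiable ℝ (U i)) (hUi : ∀ i, Integrable (U i))
    (hUb : ∀ i, ∃ C, ∀ x, |U i x| ≤ C)
    (hUV : ∀ i j x, fderiv ℝ (U i) x (EuclideanSpace.single j 1) = V i j x)
    (hV : ∀ i j, Continuous (V i j)) (hVi : ∀ i j, Integrable (V i j))
    {ψ : Euc N → ℝ} {C : ℝ} (hC : ∀ x, |ψ x| ≤ C)
    (hψ : ContDiff ℝ (⊤ : ℕ∞) ψ) (hψc : HasCompactSupport ψ) (i j : Fin N) :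
    |(∫ x, F (u x) * (U i x * fderiv ℝ ψ x (EuclideanSpace.single j 1)))
      + ∫ x, F (u x) * (V i j x * ψ x)| ≤ C * -(∑ k, ∫ x, F (u x) * V k k x) := by
  have hFc : Continuous F := continuous_iff_continuousAt.2 fun s => (hF s).continuousAt
  have hψ' : Continuous (fun x => fderiv ℝ ψ x (EuclideanSpace.single j 1)) :=
    (hψ.continuous_fderiv (by simp)).clm_apply continuous_const
  have hψ'c : HasCompactSupport (fun x => fderiv ℝ ψ x (EuclideanSpace.single j 1)) :=
    hψc.fderiv_apply (𝕜 := ℝ) _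
  have huc := hu.continuous
  have hψcont := hψ.continuous
  have hUc : ∀ i, Continuous (U i) := fun i => (hU i).continuous
  have hFuC : Continuous (fun x => F (u x)) := by fun_prop
  have hF'uC : Continuous (fun x => F' (u x)) := by fun_prop
  have hUUi : ∀ k, Integrable (fun x => F' (u x) * (U k x * U k x)) := by
    intro k
    obtain ⟨D, hD⟩ := hUb k
    exact ((hUi k).bdd_mul (hUc k).aestronglyMeasurable (Eventually.of_forall hD)).bdd_mul
      hF'uC.aestronglyMeasurable (Eventually.of_forall fun x => hFK _)
  have hFV : ∀ k, (∫ x, F (u x) * V k k x) = - ∫ x, F' (u x) * (U k x * U k x) := by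
    intro k
    have := integral_mul_fderiv_eq_neg_fderiv_mul_of_integrable (μ := volume)
      (f := fun x => F (u x)) (g := U k) (v := EuclideanSpace.single k (1 : ℝ)) ?_ ?_ ?_
      (fun x _ => comp_diff hF hu x) (fun x _ => hU k x)
    · simp only [hUV, comp_fderiv hF hu, huU, mul_assoc] at this
      exact this
    · simp only [comp_fderiv hF hu, huU, mul_assoc]
      exact hUUi k
    · simp only [hUV]
      exact (hVi k k).bdd_mul hFuC.aestronglyMeasurable (Eventually.of_forall fun x => hF1 _)
    · exact (hUi k).bdd_mul hFuC.aestronglyMeasurable (Eventually.of_forall fun x => hF1 _)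
  have hprod : ∀ x, fderiv ℝ (fun y => F (u y) * U i y) x (EuclideanSpace.single j 1)
      = F (u x) * V i j x + F' (u x) * (U i x * U j x) := by
    intro x
    rw [fderiv_fun_mul (comp_diff hF hu x) (hU i x)]
    simp only [ContinuousLinearMap.add_apply, ContinuousLinearMap.smul_apply, smul_eq_mul,
      comp_fderiv hF hu, huU, hUV]
    ring
  have i1 : Integrable (fun x => F (u x) * (V i j x * ψ x)) :=
    Continuous.integrable_of_hasCompactSupport (by fun_prop) (hψc.mul_left.mul_left)
  have i2 : Integrable (fun x => F' (u x) * (U i x * U j x) * ψ x) :=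
    Continuous.integrable_of_hasCompactSupport (by fun_prop) (hψc.mul_left)
  have hmain : (∫ x, F (u x) * (U i x * fderiv ℝ ψ x (EuclideanSpace.single j 1)))
      + (∫ x, F (u x) * (V i j x * ψ x)) = - ∫ x, F' (u x) * (U i x * U j x) * ψ x := by
    have := integral_mul_fderiv_eq_neg_fderiv_mul_of_integrable (μ := volume)
      (f := fun x => F (u x) * U i x) (g := ψ) (v := EuclideanSpace.single j (1 : ℝ)) ?_ ?_ ?_
      (fun x _ => (comp_diff hF hu x).mul (hU i x)) (fun x _ => hψ.differentiable (by simp) x)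
    · simp only [hprod, add_mul, mul_assoc] at this
      simp only [mul_assoc] at i2 ⊢
      rw [this, integral_add i1 i2]
      ring
    · simp only [hprod]
      exact Continuous.integrable_of_hasCompactSupport (by fun_prop) hψc.mul_left
    · exact Continuous.integrable_of_hasCompactSupport (by fun_prop) hψ'c.mul_left
    · exact Continuous.integrable_of_hasCompactSupport (by fun_prop) hψc.mul_left
  rw [hmain, abs_neg]
  simp only [hFV, Finset.sum_neg_distrib, neg_neg]
  rw [← integral_finsetSum _ (fun k _ => hUUi k), ← integral_const_mul, ← Real.norm_eq_abs]
  refine (norm_integral_le_integral_norm _).trans ?_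
  refine integral_mono i2.norm ((integrable_finsetSum _ (fun k _ => hUUi k)).const_mul C)
    fun x => ?_
  simp only [norm_mul, Real.norm_eq_abs, abs_of_nonneg (hF0 _)]
  rw [← Finset.mul_sum, mul_comm]
  have hUij : |U i x| * |U j x| ≤ ∑ k, U k x * U k x := by
    have hi : U i x * U i x ≤ ∑ k, U k x * U k x :=
      Finset.single_le_sum (f := fun k => U k x * U k x) (fun k _ => mul_self_nonneg _)
        (Finset.mem_univ i)
    have hj : U j x * U j x ≤ ∑ k, U k x * U k x :=
      Finset.single_le_sum (f := fun k => U k x * U k x) (fun k _ => mul_self_nonneg _)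
        (Finset.mem_univ j)
    nlinarith [sq_nonneg (|U i x| - |U j x|), abs_mul_abs_self (U i x), abs_mul_abs_self (U j x)]
  exact mul_le_mul (hC x) (mul_le_mul_of_nonneg_left hUij (hF0 _))
    (mul_nonneg (hF0 _) (mul_nonneg (abs_nonneg _) (abs_nonneg _)))
    ((abs_nonneg _).trans (hC x))

lemma L1_mul {N : ℕ} {c : ℕ → Euc N → ℝ} {c' m : Euc N → ℝ} {C : ℝ}
    (hm : Continuous m) (hmC : ∀ x, |m x| ≤ C)
    (hc : ∀ n, Integrable (c n)) (hc' : Integrable c')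
    (hclim : Tendsto (fun n => ∫ x, |c n x - c' x|) atTop (𝓝 0)) :
    Tendsto (fun n => ∫ x, |c n x * m x - c' x * m x|) atTop (𝓝 0) := by
  refine squeeze_zero (fun n => integral_nonneg fun x => abs_nonneg _) (fun n => ?_)
    (by simpa using hclim.const_mul C)
  rw [← integral_const_mul]
  refine integral_mono_of_nonneg (Eventually.of_forall fun t => abs_nonneg _)
    (((hc n).sub hc').abs.const_mul C) (Eventually.of_forall fun t => ?_)
  simp only [← sub_mul, abs_mul]
  rw [mul_comm]
  exact mul_le_mul_of_nonneg_right (hmC _) (abs_nonneg _)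

lemma weak_chain {N : ℕ} {θ θ' : ℝ → ℝ} (hθ : ∀ s, HasDerivAt θ (θ' s) s)
    (hθ' : Continuous θ') {K : ℝ} (hθ1 : ∀ s, |θ s| ≤ 1) (hK : ∀ s, |θ s + s * θ' s| ≤ K)
    {φ g : Euc N → ℝ} (hφ : Integrable φ) (hg : Integrable g) {i : Fin N}
    (hw : HasWeakPDeriv N φ i g) : HasWeakPDeriv N (fun x => θ (φ x) * φ x) i
      (fun x => (θ (φ x) + φ x * θ' (φ x)) * g x) := by
  intro ψ hψ hψc
  have hθc : Continuous θ := continuous_iff_continuousAt.2 fun s => (hθ s).continuousAt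
  have hψ' : Continuous (fun x => fderiv ℝ ψ x (EuclideanSpace.single i 1)) :=
    (hψ.continuous_fderiv (by simp)).clm_apply continuous_const
  have hψ'c : HasCompactSupport (fun x => fderiv ℝ ψ x (EuclideanSpace.single i 1)) :=
    hψc.fderiv_apply (𝕜 := ℝ) _
  obtain ⟨C, hC⟩ := hψc.exists_bound_of_continuous hψ.continuous
  obtain ⟨C', hC'⟩ := hψ'c.exists_bound_of_continuous hψ'
  obtain ⟨b, hb⟩ := exists_bumps N
  have hF : ∀ s, HasDerivAt (fun s => θ s * s) (θ s + s * θ' s) s := by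
    intro s
    have := (hθ s).mul (hasDerivAt_id s)
    have e : θ s + s * θ' s = θ' s * s + θ s * 1 := by ring
    rw [e]
    exact this
  have hF'c : Continuous fun s => θ s + s * θ' s := by fun_prop
  have hn : ∀ n, (∫ x, θ (moll (b n) φ x) *
      (moll (b n) φ x * fderiv ℝ ψ x (EuclideanSpace.single i 1)))
      = - ∫ x, (θ (moll (b n) φ x) + moll (b n) φ x * θ' (moll (b n) φ x)) *
        (moll (b n) g x * ψ x) := by
    intro n
    have := smooth_chain hF hF'c ((moll_contDiff (b n) hφ).differentiable one_ne_zero)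
      (moll_fderiv (b n) hφ hw) (moll_contDiff (b n) hg).continuous hψ hψc
    simp only [mul_assoc] at this
    exact this
  have hφn : ∀ n, Continuous (moll (b n) φ) := fun n => (moll_contDiff (b n) hφ).continuous
  have l1 := tendsto_mul_L1 (a := fun n x => θ (moll (b n) φ x)) (a' := fun x => θ (φ x))
    (c := fun n x => moll (b n) φ x * fderiv ℝ ψ x (EuclideanSpace.single i 1))
    (c' := fun x => φ x * fderiv ℝ ψ x (EuclideanSpace.single i 1)) 1
    (fun n => (hθc.comp (hφn n)).aestronglyMeasurable) (fun n x => hθ1 _)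
    (by
      filter_upwards [(hb φ hφ).1] with x hx
      exact (hθc.tendsto _).comp hx)
    (fun n => (moll_integrable (b n) hφ).mul_bdd hψ'.aestronglyMeasurable
      (Eventually.of_forall hC'))
    (hφ.mul_bdd hψ'.aestronglyMeasurable (Eventually.of_forall hC'))
    (L1_mul hψ' hC' (fun n => moll_integrable (b n) hφ) hφ (hb φ hφ).2)
  have l2 := tendsto_mul_L1
    (a := fun n x => θ (moll (b n) φ x) + moll (b n) φ x * θ' (moll (b n) φ x))
    (a' := fun x => θ (φ x) + φ x * θ' (φ x))
    (c := fun n x => moll (b n) g x * ψ x)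
    (c' := fun x => g x * ψ x) K
    (fun n => (hF'c.comp (hφn n)).aestronglyMeasurable) (fun n x => hK _)
    (by
      filter_upwards [(hb φ hφ).1] with x hx
      exact (hF'c.tendsto _).comp hx)
    (fun n => (moll_integrable (b n) hg).mul_bdd hψ.continuous.aestronglyMeasurable
      (Eventually.of_forall hC))
    (hg.mul_bdd hψ.continuous.aestronglyMeasurable (Eventually.of_forall hC))
    (L1_mul hψ.continuous hC (fun n => moll_integrable (b n) hg) hg (hb g hg).2)
  have := tendsto_nhds_unique (l1.congr hn) l2.neg
  simp only [mul_assoc]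
  exact this

lemma weak_second {N : ℕ} {F F' : ℝ → ℝ} (hF : ∀ s, HasDerivAt F (F' s) s)
    (hF' : Continuous F') {K : ℝ} (hF0 : ∀ s, 0 ≤ F' s) (hFK : ∀ s, |F' s| ≤ K)
    (hF1 : ∀ s, |F s| ≤ 1)
    {φ : Euc N → ℝ} (hφ : Integrable φ)
    {g : Fin N → Euc N → ℝ} (hg : ∀ i, Integrable (g i))
    (hgw : ∀ i, HasWeakPDeriv N φ i (g i))
    {h : Fin N → Fin N → Euc N → ℝ} (hh : ∀ i j, Integrable (h i j))
    (hhw : ∀ i j, HasWeakPDeriv N (g i) j (h i j))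
    {ψ : Euc N → ℝ} {C : ℝ} (hC : ∀ x, |ψ x| ≤ C)
    (hψ : ContDiff ℝ (⊤ : ℕ∞) ψ) (hψc : HasCompactSupport ψ) (i j : Fin N) :
    |(∫ x, F (φ x) * (g i x * fderiv ℝ ψ x (EuclideanSpace.single j 1)))
      + ∫ x, F (φ x) * (h i j x * ψ x)| ≤ C * -(∑ k, ∫ x, F (φ x) * h k k x) := by
  have hFc : Continuous F := continuous_iff_continuousAt.2 fun s => (hF s).continuousAt
  have hψ' : Continuous (fun x => fderiv ℝ ψ x (EuclideanSpace.single j 1)) :=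
    (hψ.continuous_fderiv (by simp)).clm_apply continuous_const
  have hψ'c : HasCompactSupport (fun x => fderiv ℝ ψ x (EuclideanSpace.single j 1)) :=
    hψc.fderiv_apply (𝕜 := ℝ) _
  obtain ⟨C', hC'⟩ := hψ'c.exists_bound_of_continuous hψ'
  obtain ⟨b, hb⟩ := exists_bumps N
  have hφn : ∀ n, Continuous (moll (b n) φ) := fun n => (moll_contDiff (b n) hφ).continuous
  have hn := fun n => smooth_second hF hF' hF0 hFK hF1
    ((moll_contDiff (b n) hφ).differentiable one_ne_zero)
    (fun i => moll_fderiv (b n) hφ (hgw i))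
    (fun i => (moll_contDiff (b n) (hg i)).differentiable one_ne_zero)
    (fun i => moll_integrable (b n) (hg i)) (fun i => moll_bound (b n) (hg i))
    (fun i j => moll_fderiv (b n) (hg i) (hhw i j))
    (fun i j => (moll_contDiff (b n) (hh i j)).continuous)
    (fun i j => moll_integrable (b n) (hh i j)) hC hψ hψc i j
  have hlim : ∀ᵐ x, Tendsto (fun n => F (moll (b n) φ x)) atTop (𝓝 (F (φ x))) := by
    filter_upwards [(hb φ hφ).1] with x hx
    exact (hFc.tendsto _).comp hx
  have l1 := tendsto_mul_L1 (a := fun n x => F (moll (b n) φ x)) (a' := fun x => F (φ x))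
    (c := fun n x => moll (b n) (g i) x * fderiv ℝ ψ x (EuclideanSpace.single j 1))
    (c' := fun x => g i x * fderiv ℝ ψ x (EuclideanSpace.single j 1)) 1
    (fun n => (hFc.comp (hφn n)).aestronglyMeasurable) (fun n x => hF1 _) hlim
    (fun n => (moll_integrable (b n) (hg i)).mul_bdd hψ'.aestronglyMeasurable
      (Eventually.of_forall hC'))
    ((hg i).mul_bdd hψ'.aestronglyMeasurable (Eventually.of_forall hC'))
    (L1_mul hψ' hC' (fun n => moll_integrable (b n) (hg i)) (hg i) (hb _ (hg i)).2)
  have l2 := tendsto_mul_L1 (a := fun n x => F (moll (b n) φ x)) (a' := fun x => F (φ x))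
    (c := fun n x => moll (b n) (h i j) x * ψ x)
    (c' := fun x => h i j x * ψ x) 1
    (fun n => (hFc.comp (hφn n)).aestronglyMeasurable) (fun n x => hF1 _) hlim
    (fun n => (moll_integrable (b n) (hh i j)).mul_bdd hψ.continuous.aestronglyMeasurable
      (Eventually.of_forall hC))
    ((hh i j).mul_bdd hψ.continuous.aestronglyMeasurable (Eventually.of_forall hC))
    (L1_mul hψ.continuous hC (fun n => moll_integrable (b n) (hh i j)) (hh i j)
      (hb _ (hh i j)).2)
  have l3 := fun k => tendsto_mul_L1 (a := fun n x => F (moll (b n) φ x))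
    (a' := fun x => F (φ x)) (c := fun n x => moll (b n) (h k k) x) (c' := h k k) 1
    (fun n => (hFc.comp (hφn n)).aestronglyMeasurable) (fun n x => hF1 _) hlim
    (fun n => moll_integrable (b n) (hh k k)) (hh k k) (hb _ (hh k k)).2
  exact le_of_tendsto_of_tendsto' (l1.add l2).abs
    ((tendsto_finsetSum Finset.univ fun k _ => l3 k).neg.const_mul C) hn

/-- `θ_k(s) = smoothTransition (k s)`. -/
def thk (k : ℕ) (s : ℝ) : ℝ := Real.smoothTransition (((k : ℝ) + 1) * s)

lemma st_deriv_bound : ∃ K, (∀ s, |deriv Real.smoothTransition s| ≤ K) ∧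
    (∀ s, |s * deriv Real.smoothTransition s| ≤ K) := by
  have h0 : ∀ s, s ∉ Set.Icc (0:ℝ) 1 → deriv Real.smoothTransition s = 0 := by
    intro s hs
    rw [Set.mem_Icc, not_and_or, not_le, not_le] at hs
    rcases hs with hs | hs
    · have : Real.smoothTransition =ᶠ[𝓝 s] fun _ => (0:ℝ) := by
        filter_upwards [Iio_mem_nhds hs] with y hy
        exact Real.smoothTransition.zero_of_nonpos (le_of_lt hy)
      rw [this.deriv_eq]
      simp
    · have : Real.smoothTransition =ᶠ[𝓝 s] fun _ => (1:ℝ) := by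
        filter_upwards [Ioi_mem_nhds hs] with y hy
        exact Real.smoothTransition.one_of_one_le (le_of_lt hy)
      rw [this.deriv_eq]
      simp
  have hc : Continuous (deriv Real.smoothTransition) :=
    (Real.smoothTransition.contDiff (n := 1)).continuous_deriv le_rfl
  obtain ⟨K, hK⟩ := (isCompact_Icc (a := (0:ℝ)) (b := 1)).exists_bound_of_continuousOn
    hc.continuousOn
  have hK0 : 0 ≤ K := (norm_nonneg _).trans (hK 0 (by simp))
  refine ⟨K, fun s => ?_, fun s => ?_⟩
  · by_cases hs : s ∈ Set.Icc (0:ℝ) 1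
    · exact hK s hs
    · simpa [h0 s hs] using hK0
  · by_cases hs : s ∈ Set.Icc (0:ℝ) 1
    · rw [abs_mul, abs_of_nonneg hs.1]
      have := hK s hs
      rw [Real.norm_eq_abs] at this
      nlinarith [hs.1, hs.2, abs_nonneg (deriv Real.smoothTransition s)]
    · simpa [h0 s hs] using hK0

lemma thk_hasDeriv (k : ℕ) (s : ℝ) : HasDerivAt (thk k)
    (((k : ℝ) + 1) * deriv Real.smoothTransition (((k : ℝ) + 1) * s)) s := by
  have h1 : HasDerivAt Real.smoothTransition
      (deriv Real.smoothTransition (((k : ℝ) + 1) * s)) (((k : ℝ) + 1) * s) :=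
    ((Real.smoothTransition.contDiff (n := 1)).differentiable one_ne_zero _).hasDerivAt
  have h2 := h1.comp s ((hasDerivAt_id s).const_mul ((k : ℝ) + 1))
  simp only [mul_one] at h2
  rw [mul_comm]
  exact h2

lemma thk_abs (k : ℕ) (s : ℝ) : |thk k s| ≤ 1 := by
  unfold thk
  rw [abs_of_nonneg (Real.smoothTransition.nonneg _)]
  exact Real.smoothTransition.le_one _

lemma thk_eventually {s : ℝ} (hs : 0 < s) : ∀ᶠ k : ℕ in atTop, 1 < ((k : ℝ) + 1) * s := by
  have : Tendsto (fun k : ℕ => ((k : ℝ) + 1) * s) atTop atTop :=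
    (tendsto_atTop_add_const_right _ _ tendsto_natCast_atTop_atTop).atTop_mul_const hs
  exact this.eventually_gt_atTop 1

lemma thk_lim (s : ℝ) : Tendsto (fun k => thk k s) atTop (𝓝 (if 0 < s then 1 else 0)) := by
  split_ifs with hs
  · refine tendsto_const_nhds.congr' ?_
    filter_upwards [thk_eventually hs] with k hk
    exact (Real.smoothTransition.one_of_one_le hk.le).symm
  · refine tendsto_const_nhds.congr fun k => ?_
    refine (Real.smoothTransition.zero_of_nonpos ?_).symm
    have : (0:ℝ) ≤ (k : ℝ) + 1 := by positivity
    nlinarith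

lemma thk_lim2 (s : ℝ) : Tendsto (fun k : ℕ => thk k s +
    s * (((k : ℝ) + 1) * deriv Real.smoothTransition (((k : ℝ) + 1) * s))) atTop
    (𝓝 (if 0 < s then 1 else 0)) := by
  have h : Tendsto (fun k : ℕ => s * (((k : ℝ) + 1) *
      deriv Real.smoothTransition (((k : ℝ) + 1) * s))) atTop (𝓝 0) := by
    rcases lt_trichotomy s 0 with hs | hs | hs
    · refine tendsto_const_nhds.congr fun k => ?_
      have h1 : ((k : ℝ) + 1) * s < 0 := mul_neg_of_pos_of_neg (by positivity) hs
      have : Real.smoothTransition =ᶠ[𝓝 (((k : ℝ) + 1) * s)] fun _ => (0:ℝ) := by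
        filter_upwards [Iio_mem_nhds h1] with y hy
        exact Real.smoothTransition.zero_of_nonpos (le_of_lt hy)
      rw [this.deriv_eq]
      simp
    · simp [hs]
    · refine tendsto_const_nhds.congr' ?_
      filter_upwards [thk_eventually hs] with k h1
      have : Real.smoothTransition =ᶠ[𝓝 (((k : ℝ) + 1) * s)] fun _ => (1:ℝ) := by
        filter_upwards [Ioi_mem_nhds h1] with y hy
        exact Real.smoothTransition.one_of_one_le (le_of_lt hy)
      rw [this.deriv_eq]
      simp
  simpa using (thk_lim s).add h

lemma lim_int {N : ℕ} {A : ℕ → ℝ → ℝ} {C : ℝ} (hA : ∀ k, Continuous (A k))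
    (hAC : ∀ k s, |A k s| ≤ C)
    (hlim : ∀ s, Tendsto (fun k => A k s) atTop (𝓝 (if 0 < s then 1 else 0)))
    {φ c : Euc N → ℝ} (hφ : Integrable φ) (hc : Integrable c) :
    Tendsto (fun k => ∫ x, A k (φ x) * c x) atTop
      (𝓝 (∫ x, (if 0 < φ x then 1 else 0) * c x)) := by
  refine tendsto_mul_L1 (a := fun k x => A k (φ x)) (c := fun _ => c) C
    (fun k => (hA k).comp_aestronglyMeasurable hφ.aestronglyMeasurable) (fun k x => hAC k _)
    (Eventually.of_forall fun x => hlim _) (fun _ => hc) hc (by simp)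

/-- Let `φ ∈ W^{2,1}(ℝ^N)` (with integrable weak first derivatives
`g i` and weak second derivatives `h i j`, so that `Δφ = Σᵢ h i i`) satisfy
`∫_{{φ > 0}} Δφ = 0`.  Then `φ⁺ = max(φ,0)` belongs to `W^{2,1}(ℝ^N)` and
`Δφ⁺ = 1_{{φ>0}} Δφ` almost everywhere. -/
theorem stmt17 (N : ℕ) (hN : 1 ≤ N) (φ : Euc N → ℝ) (hφ : Integrable φ)
    (g : Fin N → Euc N → ℝ) (hg : ∀ i, Integrable (g i))
    (hgw : ∀ i, HasWeakPDeriv N φ i (g i))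
    (h : Fin N → Fin N → Euc N → ℝ) (hh : ∀ i j, Integrable (h i j))
    (hhw : ∀ i j, HasWeakPDeriv N (g i) j (h i j))
    (hzero : (∫ x in {x | 0 < φ x}, ∑ i, h i i x) = 0) :
    Integrable (fun x => max (φ x) 0) ∧
      ∃ G : Fin N → Euc N → ℝ, (∀ i, Integrable (G i)) ∧
        (∀ i, HasWeakPDeriv N (fun x => max (φ x) 0) i (G i)) ∧
        ∃ H : Fin N → Fin N → Euc N → ℝ, (∀ i j, Integrable (H i j)) ∧
          (∀ i j, HasWeakPDeriv N (G i) j (H i j)) ∧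
          (fun x => ∑ i, H i i x) =ᵐ[volume]
            (Set.indicator {x | 0 < φ x} (fun x => ∑ i, h i i x)) := by
  have hS : NullMeasurableSet {x | 0 < φ x} volume :=
    nullMeasurableSet_lt aemeasurable_const hφ.aemeasurable
  have hind : ∀ f : Euc N → ℝ, (fun x => (if 0 < φ x then 1 else 0) * f x)
      = Set.indicator {x | 0 < φ x} f := by
    intro f
    ext x
    by_cases hx : 0 < φ x <;> simp [hx]
  have hint : ∀ f : Euc N → ℝ, Integrable f →
      Integrable (fun x => (if 0 < φ x then 1 else 0) * f x) := by
    intro f hf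
    rw [hind]
    exact hf.indicator₀ hS
  obtain ⟨K, hK1, hK2⟩ := st_deriv_bound
  have hdc : Continuous (deriv Real.smoothTransition) :=
    (Real.smoothTransition.contDiff (n := 1)).continuous_deriv le_rfl
  have hthc : ∀ k, Continuous (thk k) := fun k =>
    continuous_iff_continuousAt.2 fun s => (thk_hasDeriv k s).continuousAt
  have hbd : ∀ (k : ℕ) (s : ℝ), |thk k s + s * (((k : ℝ) + 1) *
      deriv Real.smoothTransition (((k : ℝ) + 1) * s))| ≤ 1 + K := by
    intro k s
    refine (abs_add_le _ _).trans (add_le_add (thk_abs k s) ?_)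
    have e : s * (((k : ℝ) + 1) * deriv Real.smoothTransition (((k : ℝ) + 1) * s))
        = (((k : ℝ) + 1) * s) * deriv Real.smoothTransition (((k : ℝ) + 1) * s) := by ring
    rw [e]
    exact hK2 _
  refine ⟨hφ.pos_part, fun i x => (if 0 < φ x then 1 else 0) * g i x,
    fun i => hint _ (hg i), fun i ψ hψ hψc => ?_,
    fun i j x => (if 0 < φ x then 1 else 0) * h i j x,
    fun i j => hint _ (hh i j), fun i j ψ hψ hψc => ?_, ?_⟩
  · have hψ' : Continuous (fun x => fderiv ℝ ψ x (EuclideanSpace.single i 1)) :=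
      (hψ.continuous_fderiv (by simp)).clm_apply continuous_const
    have hψ'c : HasCompactSupport (fun x => fderiv ℝ ψ x (EuclideanSpace.single i 1)) :=
      hψc.fderiv_apply (𝕜 := ℝ) _
    obtain ⟨C, hC⟩ := hψc.exists_bound_of_continuous hψ.continuous
    obtain ⟨C', hC'⟩ := hψ'c.exists_bound_of_continuous hψ'
    have hk := fun k => weak_chain (thk_hasDeriv k) (by fun_prop) (thk_abs k) (hbd k) hφ (hg i)
      (hgw i) ψ hψ hψc
    simp only [mul_assoc] at hk
    have l1 := lim_int hthc thk_abs thk_lim hφ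
      (hφ.mul_bdd hψ'.aestronglyMeasurable (Eventually.of_forall hC'))
    have l2 := lim_int (A := fun k s => thk k s + s * (((k : ℝ) + 1) *
      deriv Real.smoothTransition (((k : ℝ) + 1) * s)))
      (fun k => by have := hthc k; fun_prop) hbd thk_lim2 hφ
      ((hg i).mul_bdd hψ.continuous.aestronglyMeasurable (Eventually.of_forall hC))
    have := tendsto_nhds_unique (l1.congr hk) l2.neg
    simp only [mul_assoc]
    rw [← this]
    congr 1
    ext x
    by_cases hx : 0 < φ x
    · simp [hx, max_eq_left hx.le]
    · simp [hx, max_eq_right (not_lt.1 hx)]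
  · have hψ' : Continuous (fun x => fderiv ℝ ψ x (EuclideanSpace.single j 1)) :=
      (hψ.continuous_fderiv (by simp)).clm_apply continuous_const
    have hψ'c : HasCompactSupport (fun x => fderiv ℝ ψ x (EuclideanSpace.single j 1)) :=
      hψc.fderiv_apply (𝕜 := ℝ) _
    obtain ⟨C, hC⟩ := hψc.exists_bound_of_continuous hψ.continuous
    obtain ⟨C', hC'⟩ := hψ'c.exists_bound_of_continuous hψ'
    have hk := fun k : ℕ => weak_second (thk_hasDeriv k) (by fun_prop) (K := ((k : ℝ) + 1) * K)
      (fun s => mul_nonneg (by positivity) (Real.smoothTransition.monotone.deriv_nonneg))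
      (fun s => by
        rw [abs_mul, abs_of_nonneg (by positivity : (0:ℝ) ≤ (k : ℝ) + 1)]
        exact mul_le_mul_of_nonneg_left (hK1 _) (by positivity))
      (thk_abs k) hφ hg hgw hh hhw hC hψ hψc i j
    have l1 := lim_int hthc thk_abs thk_lim hφ
      ((hg i).mul_bdd hψ'.aestronglyMeasurable (Eventually.of_forall hC'))
    have l2 := lim_int hthc thk_abs thk_lim hφ
      ((hh i j).mul_bdd hψ.continuous.aestronglyMeasurable (Eventually.of_forall hC))
    have l3 := fun k => lim_int hthc thk_abs thk_lim hφ (hh k k)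
    have hle := le_of_tendsto_of_tendsto' (l1.add l2).abs
      ((tendsto_finsetSum Finset.univ fun k _ => l3 k).neg.const_mul C) hk
    have hz : (∑ k, ∫ x, (if 0 < φ x then 1 else 0) * h k k x) = 0 := by
      rw [← integral_indicator₀ hS, ← hind] at hzero
      simp only [Finset.mul_sum] at hzero
      rw [← integral_finsetSum _ (fun k _ => hint _ (hh k k))]
      exact hzero
    rw [hz, neg_zero, mul_zero] at hle
    have := abs_nonpos_iff.1 hle
    simp only [mul_assoc]
    linarith
  · refine Eventually.of_forall fun x => ?_
    simp only [← hind, Finset.mul_sum]
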